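/- arXiv:0710.3912 — 6 statements merged into one kernel-verified Lean document; each statement's English description precedes it below -/
import Mathlib

section
/- Let f : ℝ → ℝ be Lipschitz continuous, let g : ℝ → ℝ be a measurable function such that f is differentiable with derivative f'(x) = g(x) for almost every x ∈ ℝ, and let ω : ℝ → ℝ be a smooth nonnegative function with compact support and ∫_ℝ ω = 1. Then the convolution f * ω is differentiable everywhere and (f * ω)'(x) = (g * ω)(x) for every x ∈ ℝ. -/
open MeasureTheory

/-- If `f : ℝ → ℝ` is Lipschitz with a.e. derivative `g` (measurable), and `ω` is a
smooth nonnegative compactly supported function with integral 1, then the convolution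
`f * ω` is differentiable everywhere with derivative `g * ω`. -/
theorem stmt_0 (f g ω : ℝ → ℝ) (K : NNReal) (hf : LipschitzWith K f)
    (hg : Measurable g)
    (hfg : ∀ᵐ x ∂(volume : Measure ℝ), HasDerivAt f (g x) x)
    (hω : ContDiff ℝ (⊤ : ℕ∞) ω) (hω0 : ∀ x, 0 ≤ ω x) (hωc : HasCompactSupport ω)
    (hω1 : (∫ x, ω x) = 1) :
    ∀ x : ℝ, HasDerivAt (fun y => ∫ t, f t * ω (y - t)) (∫ t, g t * ω (x - t)) x := by
  intro x
  have hcomm (h : ℝ → ℝ) (y : ℝ) : ∫ t, h t * ω (y - t) = ∫ t, h (y - t) * ω t := by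
    simpa using (integral_sub_left_eq_self (fun t => h t * ω (y - t)) volume y).symm
  simp only [hcomm]
  have hfc := hf.continuous
  have hωcont := hω.continuous
  have hcont (y : ℝ) : Continuous fun t => f (y - t) * ω t := by fun_prop
  refine (hasDerivAt_integral_of_dominated_loc_of_lip (s := Set.univ)
    (F := fun y t => f (y - t) * ω t) (F' := fun t => g (x - t) * ω t)
    (bound := fun t => K * ω t) Filter.univ_mem
    (Filter.Eventually.of_forall fun y => (hcont y).aestronglyMeasurable)
    ((hcont x).integrable_of_hasCompactSupport hωc.mul_left)
    ((hg.comp (measurable_const.sub measurable_id)).mul hωcont.measurable).aestronglyMeasurable ?_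
    ((hωcont.integrable_of_hasCompactSupport hωc).const_mul _) ?_).2
  · refine Filter.Eventually.of_forall fun t => LipschitzOnWith.of_dist_le_mul fun y _ z _ => ?_
    have h := hf.dist_le_mul (y - t) (z - t)
    rw [dist_sub_right, Real.dist_eq] at h
    rw [Real.dist_eq, ← sub_mul, abs_mul, abs_of_nonneg (hω0 t), Real.coe_nnabs,
      abs_of_nonneg (mul_nonneg K.coe_nonneg (hω0 t)), mul_right_comm]
    exact mul_le_mul_of_nonneg_right h (hω0 t)
  · filter_upwards [(quasiMeasurePreserving_sub_left volume x).ae hfg] with t ht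
    exact (ht.comp_sub_const x t).mul_const (ω t)
end

section
/- For every ε with 0 < ε < 1/2 there exists a twice continuously differentiable function g_ε : [0, 1/2) → ℝ such that: g_ε(0) = 0, g_ε'(0) = 1, g_ε''(0) = 0; g_ε''(r) ≤ −r for all r ∈ [0, 1/2); g_ε'(r) ≤ g₀'(r) = 1 − 3r² for all r ∈ [0, 1/2); and g_ε(r) = g₀(r)/2 = r(1 − r²)/2 for all r ∈ [ε, 1/2). -/
/-- Freezing a function at a critical point `d` of it gives a differentiable function. -/
theorem hasDerivAt_comp_min {p p' : ℝ → ℝ} {d : ℝ} (hp : ∀ x, HasDerivAt p (p' x) x)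
    (hd : p' d = 0) (r : ℝ) :
    HasDerivAt (fun x => p (min x d)) (p' (min r d)) r := by
  rcases lt_trichotomy r d with h | rfl | h
  · rw [min_eq_left h.le]
    refine (hp r).congr_of_eventuallyEq ?_
    filter_upwards [Iio_mem_nhds h] with x hx
    rw [min_eq_left (le_of_lt hx)]
  · rw [min_self, ← hasDerivWithinAt_univ, ← Set.Iic_union_Ici (a := r)]
    refine HasDerivWithinAt.union ?_ ?_
    · refine (hp r).hasDerivWithinAt.congr (fun x hx => ?_) ?_
      · rw [min_eq_left hx]
      · rw [min_self]
    · rw [hd]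
      refine (hasDerivWithinAt_const r _ (p r)).congr (fun x hx => ?_) ?_
      · rw [min_eq_right hx]
      · rw [min_self]
  · rw [min_eq_right h.le, hd]
    refine (hasDerivAt_const r (p d)).congr_of_eventuallyEq ?_
    filter_upwards [Ioi_mem_nhds h] with x hx
    rw [min_eq_right (le_of_lt hx)]

/-- For every `0 < ε < 1/2` there is a twice continuously differentiable function
`g_ε` on `[0, 1/2)` with `g_ε(0) = 0`, `g_ε'(0) = 1`, `g_ε''(0) = 0`,
`g_ε''(r) ≤ -r`, `g_ε'(r) ≤ 1 - 3r²`, and `g_ε(r) = r(1-r²)/2` for `r ≥ ε`. -/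
theorem stmt_4 (ε : ℝ) (hε0 : 0 < ε) (hε : ε < 1 / 2) :
    ∃ g g' g'' : ℝ → ℝ,
      (∀ r ∈ Set.Ico (0 : ℝ) (1 / 2), HasDerivWithinAt g (g' r) (Set.Ico 0 (1 / 2)) r) ∧
      (∀ r ∈ Set.Ico (0 : ℝ) (1 / 2), HasDerivWithinAt g' (g'' r) (Set.Ico 0 (1 / 2)) r) ∧
      ContinuousOn g'' (Set.Ico 0 (1 / 2)) ∧
      g 0 = 0 ∧ g' 0 = 1 ∧ g'' 0 = 0 ∧
      (∀ r ∈ Set.Ico (0 : ℝ) (1 / 2), g'' r ≤ -r) ∧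
      (∀ r ∈ Set.Ico (0 : ℝ) (1 / 2), g' r ≤ 1 - 3 * r ^ 2) ∧
      (∀ r ∈ Set.Ico ε (1 / 2), g r = r * (1 - r ^ 2) / 2) := by
  obtain ⟨d, hd⟩ : ∃ d : ℝ, d = 2 * ε ^ 7 / 7 := ⟨_, rfl⟩
  have hd0 : 0 < d := by rw [hd]; positivity
  have hdε : d ≤ ε := by
    have : ε ^ 6 ≤ 1 := pow_le_one₀ hε0.le (by linarith)
    rw [hd]
    nlinarith
  -- `A` is a steep bump of height `1/2` at the origin, supported in `[0, d]`.
  let P : ℝ → ℝ := fun x => (x - 2 * x ^ 3 / (3 * d ^ 2) + x ^ 5 / (5 * d ^ 4)) / 2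
  let A : ℝ → ℝ := fun x => (1 - x ^ 2 / d ^ 2) ^ 2 / 2
  let A' : ℝ → ℝ := fun x => -(2 * x / d ^ 2) * (1 - x ^ 2 / d ^ 2)
  -- `B` is a shallow bump supported in `[0, ε]` with the same integral as `A`.
  let Q : ℝ → ℝ := fun x => ε ^ 4 * x ^ 3 / 3 - 2 * ε ^ 2 * x ^ 5 / 5 + x ^ 7 / 7
  let B : ℝ → ℝ := fun x => x ^ 2 * (ε ^ 2 - x ^ 2) ^ 2
  let B' : ℝ → ℝ := fun x => 2 * x * (ε ^ 2 - x ^ 2) ^ 2 - 4 * x ^ 3 * (ε ^ 2 - x ^ 2)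
  have hP (x : ℝ) : HasDerivAt P (A x) x := by
    have := ((((hasDerivAt_id x).sub (((hasDerivAt_pow 3 x).const_mul 2).div_const
      (3 * d ^ 2))).add ((hasDerivAt_pow 5 x).div_const (5 * d ^ 4))).div_const 2)
    refine this.congr_deriv ?_
    simp only [A]
    field_simp
    norm_num
    ring
  have hA (x : ℝ) : HasDerivAt A (A' x) x := by
    have := (((((hasDerivAt_pow 2 x).div_const (d ^ 2)).const_sub 1).pow 2).div_const 2)
    refine this.congr_deriv ?_
    simp only [A']
    norm_num
    ring
  have hQ (x : ℝ) : HasDerivAt Q (B x) x := by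
    have := ((((hasDerivAt_pow 3 x).const_mul (ε ^ 4)).div_const 3).sub
      (((hasDerivAt_pow 5 x).const_mul (2 * ε ^ 2)).div_const 5)).add
      ((hasDerivAt_pow 7 x).div_const 7)
    refine this.congr_deriv ?_
    simp only [B]
    norm_num
    ring
  have hB (x : ℝ) : HasDerivAt B (B' x) x := by
    have := (hasDerivAt_pow 2 x).mul (((hasDerivAt_pow 2 x).const_sub (ε ^ 2)).pow 2)
    refine this.congr_deriv ?_
    simp only [B']
    norm_num
    ring
  have hAd : A d = 0 := by simp [A, hd0.ne']
  have hA'd : A' d = 0 := by simp [A', hd0.ne']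
  have hBε : B ε = 0 := by simp [B]
  have hB'ε : B' ε = 0 := by simp [B']
  have hG (x : ℝ) : HasDerivAt (fun x : ℝ => x * (1 - x ^ 2) / 2) ((1 - 3 * x ^ 2) / 2) x := by
    have := ((hasDerivAt_id x).mul ((hasDerivAt_pow 2 x).const_sub 1)).div_const 2
    refine this.congr_deriv ?_
    norm_num
    ring
  have hG' (x : ℝ) : HasDerivAt (fun x : ℝ => (1 - 3 * x ^ 2) / 2) (-3 * x) x := by
    have := (((hasDerivAt_pow 2 x).const_mul 3).const_sub 1).div_const 2
    refine this.congr_deriv ?_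
    norm_num
    ring
  refine ⟨fun r => r * (1 - r ^ 2) / 2 + P (min r d) - Q (min r ε),
    fun r => (1 - 3 * r ^ 2) / 2 + A (min r d) - B (min r ε),
    fun r => -3 * r + A' (min r d) - B' (min r ε),
    fun r _ => (((hG r).add (hasDerivAt_comp_min hP hAd r)).sub
      (hasDerivAt_comp_min hQ hBε r)).hasDerivWithinAt,
    fun r _ => (((hG' r).add (hasDerivAt_comp_min hA hA'd r)).sub
      (hasDerivAt_comp_min hB hB'ε r)).hasDerivWithinAt, ?_, ?_, ?_, ?_, ?_, ?_, ?_⟩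
  · refine Continuous.continuousOn ?_
    simp only [A', B']
    fun_prop
  · simp [P, Q, hd0.le, hε0.le]
  · norm_num [A, B, hd0.le, hε0.le]
  · simp [A', B', hd0.le, hε0.le]
  · rintro r ⟨hr0, -⟩
    have hA'_nonpos : A' (min r d) ≤ 0 := by
      have hm0 : 0 ≤ min r d := le_min hr0 hd0.le
      have hm : min r d ^ 2 / d ^ 2 ≤ 1 :=
        div_le_one_of_le₀ (pow_le_pow_left₀ hm0 (min_le_right r d) 2) (by positivity)
      have : 0 ≤ 2 * min r d / d ^ 2 := by positivity
      simp only [A']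
      nlinarith
    have hB'_ge : -(2 * r) ≤ B' (min r ε) := by
      have hmr : min r ε ≤ r := min_le_left r ε
      have hm0 : 0 ≤ min r ε := le_min hr0 hε0.le
      generalize min r ε = m at hmr hm0 ⊢
      have hε4 : ε ^ 4 ≤ 1 := pow_le_one₀ hε0.le (by linarith)
      have hq : 4 * m ^ 2 * (ε ^ 2 - m ^ 2) ≤ 1 := by
        nlinarith [sq_nonneg (ε ^ 2 - 2 * m ^ 2)]
      have h₁ : 0 ≤ m * (1 - 4 * m ^ 2 * (ε ^ 2 - m ^ 2)) := mul_nonneg hm0 (by linarith)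
      have h₂ : 0 ≤ 2 * m * (ε ^ 2 - m ^ 2) ^ 2 := by positivity
      simp only [B']
      nlinarith
    linarith
  · rintro r ⟨hr0, hr⟩
    have hB_nonneg : 0 ≤ B (min r ε) := by simp only [B]; positivity
    have hA_le : A (min r d) ≤ (1 - 3 * r ^ 2) / 2 := by
      rcases le_total r d with h | h
      · rw [min_eq_left h]
        have hu1 : r ^ 2 / d ^ 2 ≤ 1 :=
          div_le_one_of_le₀ (pow_le_pow_left₀ hr0 h 2) (by positivity)
        have hu0 : 0 ≤ r ^ 2 / d ^ 2 := by positivity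
        have hu : 3 * r ^ 2 ≤ r ^ 2 / d ^ 2 := by
          rw [le_div_iff₀ (by positivity)]
          have : d ^ 2 ≤ 1 / 4 := by nlinarith
          nlinarith [sq_nonneg r]
        simp only [A]
        nlinarith
      · rw [min_eq_right h, hAd]
        nlinarith
    linarith
  · rintro r ⟨hr, -⟩
    have hPQ : P d = Q ε := by
      have hPd : P d = 4 * d / 15 := by
        simp only [P]
        field_simp
        norm_num
      rw [hPd, hd]
      simp only [Q]
      ring
    simp only [min_eq_right hr, min_eq_right (hdε.trans hr), hPQ]
    ring
end

section
/- Let 0 < ε ≤ 1/3 and let g : [0, 1/2) → ℝ be a twice continuously differentiable function satisfying: g(0) = 0, g'(0) = 1, g''(r) ≤ −r for all r ∈ [0, 1/2), g'(r) ≤ g₀'(r) = 1 − 3r² for all r ∈ [0, 1/2), and g(r) = g₀(r)/2 for all r ∈ [ε, 1/2). Let 0 < t < 1/3 and let t₀ ∈ [0, 1/2) satisfy g₀(t₀) = g(t). Then g'(t) ≤ g₀'(t₀) and 7·t·g'(t) ≥ t₀·g₀'(t₀) + g(t). -/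
/-- Lemma 1.3: if `g` is a twice continuously differentiable function on `[0,1/2)`
with `g(0) = 0`, `g'(0) = 1`, `g''(r) ≤ -r`, `g'(r) ≤ g₀'(r) = 1 - 3r²`, and
`g = g₀/2` on `[ε, 1/2)` where `g₀(r) = r(1-r²)`, then for `0 < t < 1/3` and
`t₀` with `g₀(t₀) = g(t)` one has `g'(t) ≤ g₀'(t₀)` and
`7 t g'(t) ≥ t₀ g₀'(t₀) + g(t)`. -/
theorem stmt_6 (ε : ℝ) (hε0 : 0 < ε) (hε : ε ≤ 1 / 3)
    (g g' g'' : ℝ → ℝ)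
    (hd1 : ∀ r ∈ Set.Ico (0 : ℝ) (1 / 2), HasDerivWithinAt g (g' r) (Set.Ico 0 (1 / 2)) r)
    (hd2 : ∀ r ∈ Set.Ico (0 : ℝ) (1 / 2), HasDerivWithinAt g' (g'' r) (Set.Ico 0 (1 / 2)) r)
    (hc : ContinuousOn g'' (Set.Ico 0 (1 / 2)))
    (h0 : g 0 = 0) (h1 : g' 0 = 1)
    (h2 : ∀ r ∈ Set.Ico (0 : ℝ) (1 / 2), g'' r ≤ -r)
    (h3 : ∀ r ∈ Set.Ico (0 : ℝ) (1 / 2), g' r ≤ 1 - 3 * r ^ 2)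
    (h4 : ∀ r ∈ Set.Ico ε (1 / 2), g r = r * (1 - r ^ 2) / 2)
    (t t₀ : ℝ) (ht0 : 0 < t) (ht : t < 1 / 3)
    (ht₀ : t₀ ∈ Set.Ico (0 : ℝ) (1 / 2))
    (heq : t₀ * (1 - t₀ ^ 2) = g t) :
    g' t ≤ 1 - 3 * t₀ ^ 2 ∧ 7 * t * g' t ≥ t₀ * (1 - 3 * t₀ ^ 2) + g t := by
  have hconv : Convex ℝ (Set.Ico (0 : ℝ) (1 / 2)) := convex_Ico _ _
  have htm : t ∈ Set.Ico (0 : ℝ) (1 / 2) := ⟨ht0.le, by linarith⟩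
  have hzm : (0 : ℝ) ∈ Set.Ico (0 : ℝ) (1 / 2) := by norm_num
  have hsm : (7 / 20 : ℝ) ∈ Set.Ico (0 : ℝ) (1 / 2) := by norm_num
  have hg₀ (r : ℝ) : HasDerivAt (fun x : ℝ => x * (1 - x ^ 2)) (1 - 3 * r ^ 2) r := by
    refine ((hasDerivAt_id' r).mul ((hasDerivAt_pow 2 r).const_sub 1)).congr_deriv ?_
    push_cast
    ring
  have hd (r : ℝ) (hr : r ∈ Set.Ico (0 : ℝ) (1 / 2)) :
      HasDerivWithinAt (fun x => g x - x * (1 - x ^ 2)) (g' r - (1 - 3 * r ^ 2))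
        (Set.Ico 0 (1 / 2)) r :=
    (hd1 r hr).sub (hg₀ r).hasDerivWithinAt
  have hsub : AntitoneOn (fun x => g x - x * (1 - x ^ 2)) (Set.Ico 0 (1 / 2)) :=
    antitoneOn_of_hasDerivWithinAt_nonpos hconv
      (fun r hr => (hd r hr).continuousWithinAt)
      (fun r hr => (hd r (interior_subset hr)).mono interior_subset)
      (fun r hr => sub_nonpos.2 (h3 r (interior_subset hr)))
  have hanti : AntitoneOn g' (Set.Ico 0 (1 / 2)) :=
    antitoneOn_of_hasDerivWithinAt_nonpos hconv
      (fun r hr => (hd2 r hr).continuousWithinAt)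
      (fun r hr => (hd2 r (interior_subset hr)).mono interior_subset)
      (fun r hr => (h2 r (interior_subset hr)).trans
        (neg_nonpos.2 (interior_subset hr).1))
  have hle : g t ≤ t * (1 - t ^ 2) := by
    have := hsub hzm htm ht0.le
    simp only [h0] at this
    linarith
  have ht₀t : t₀ ≤ t := by
    by_contra! hlt
    have h₀ := ht₀.2
    have hpos : 0 < 1 - (t₀ ^ 2 + t₀ * t + t ^ 2) := by nlinarith
    nlinarith [mul_pos (sub_pos.2 hlt) hpos]
  -- Beyond `ε` the function is explicit; evaluating at `7 / 20 > ε` bounds `g' t` below.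
  have hs : g' (7 / 20) = 253 / 800 := by
    have hnhds : Set.Ioo ε (1 / 2) ∈ nhds (7 / 20 : ℝ) :=
      Ioo_mem_nhds (by linarith) (by norm_num)
    have hg : HasDerivAt g (g' (7 / 20)) (7 / 20) :=
      (hd1 _ hsm).hasDerivAt (Ico_mem_nhds (by norm_num) (by norm_num))
    have hg' : HasDerivAt g ((1 - 3 * (7 / 20) ^ 2) / 2) (7 / 20) :=
      ((hg₀ (7 / 20)).div_const 2).congr_of_eventuallyEq
        (Filter.mem_of_superset hnhds fun x hx => h4 x ⟨hx.1.le, hx.2⟩)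
    rw [hg.unique hg']
    norm_num
  have hlow : 253 / 800 ≤ g' t := hs ▸ hanti htm hsm (by linarith)
  have h₀ := ht₀.1
  refine ⟨(h3 t htm).trans (by nlinarith), ?_⟩
  nlinarith [mul_le_mul_of_nonneg_left hlow ht0.le, pow_nonneg h₀ 3, pow_pos ht0 3]
end

section
/- Let E be a real inner product space and let A, B, X, Y ∈ E satisfy ⟨A, X⟩ = ⟨A, Y⟩ = ⟨B, X⟩ = ⟨B, Y⟩ = 0, ‖A + X‖ = ‖B + Y‖ = 1, and ⟨A + X, B + Y⟩ = 0. Then W(A, B; X, Y) ≥ (1/2)·(⟨A, A⟩ + ⟨B, B⟩)·(⟨X, X⟩ + ⟨Y, Y⟩). -/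
open scoped RealInnerProductSpace

/-- If `{A, B} ⊥ {X, Y}` and `A + X`, `B + Y` form an orthonormal system then
`W(A, B; X, Y) ≥ (1/2)(⟪A, A⟫ + ⟪B, B⟫)(⟪X, X⟫ + ⟪Y, Y⟫)`. -/
theorem stmt_9 {E : Type*} [NormedAddCommGroup E] [InnerProductSpace ℝ E]
    (A B X Y : E)
    (hAX : ⟪A, X⟫ = 0) (hAY : ⟪A, Y⟫ = 0) (hBX : ⟪B, X⟫ = 0) (hBY : ⟪B, Y⟫ = 0)
    (hn1 : ‖A + X‖ = 1) (hn2 : ‖B + Y‖ = 1) (horth : ⟪A + X, B + Y⟫ = 0) :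
    ⟪A, A⟫ * ⟪Y, Y⟫ + ⟪B, B⟫ * ⟪X, X⟫ - 2 * ⟪A, B⟫ * ⟪X, Y⟫ ≥
      (1 / 2) * (⟪A, A⟫ + ⟪B, B⟫) * (⟪X, X⟫ + ⟪Y, Y⟫) := by
  have hA : ⟪A, A⟫ + ⟪X, X⟫ = 1 := by
    have h := real_inner_self_eq_norm_sq (A + X)
    rw [hn1, real_inner_add_add_self, hAX] at h
    linarith
  have hB : ⟪B, B⟫ + ⟪Y, Y⟫ = 1 := by
    have h := real_inner_self_eq_norm_sq (B + Y)
    rw [hn2, real_inner_add_add_self, hBY] at h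
    linarith
  have hXY : ⟪X, Y⟫ = -⟪A, B⟫ := by
    rw [inner_add_left, inner_add_right, inner_add_right, hAY,
      real_inner_comm B X, hBX] at horth
    linarith
  rw [hXY, eq_sub_of_add_eq' hA, eq_sub_of_add_eq' hB]
  -- The difference of the two sides is `(⟪A, A⟫ - ⟪B, B⟫)² / 2 + 2 ⟪A, B⟫²`.
  nlinarith [sq_nonneg (⟪A, A⟫ - ⟪B, B⟫), sq_nonneg ⟪A, B⟫]
end

section
/- For every ε > 0 there exist a function φ : (0, ∞) → ℝ and constants δ₁, δ₂ with 0 < δ₁ < δ₂ ≤ ε such that: φ is infinitely differentiable; 0 ≤ φ(x) ≤ 1 for all x > 0; φ(x) = 1 for all x ∈ (0, δ₁] and φ(x) = 0 for all x ≥ δ₂; and |x·φ'(x)| ≤ ε and |x²·φ''(x)| ≤ ε for all x > 0. -/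
open Real in
theorem hasCompactSupport_deriv_smoothTransition : HasCompactSupport (deriv smoothTransition) := by
  refine HasCompactSupport.intro (isCompact_Icc (a := (0 : ℝ)) (b := 1)) fun x hx => ?_
  rw [Set.mem_Icc, not_and_or, not_le, not_le] at hx
  rcases hx with hx | hx
  · have h : smoothTransition =ᶠ[nhds x] fun _ => 0 := by
      filter_upwards [Iio_mem_nhds hx] with y hy using
        smoothTransition.zero_of_nonpos (le_of_lt hy)
    rw [h.deriv_eq, deriv_const]
  · have h : smoothTransition =ᶠ[nhds x] fun _ => 1 := by
      filter_upwards [Ioi_mem_nhds hx] with y hy using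
        smoothTransition.one_of_one_le (le_of_lt hy)
    rw [h.deriv_eq, deriv_const]

open Real in
theorem exists_bound_deriv_smoothTransition :
    ∃ M : ℝ, 0 < M ∧ ∀ x, |deriv smoothTransition x| ≤ M ∧
      |deriv (deriv smoothTransition) x| ≤ M := by
  have hS : ContDiff ℝ 2 smoothTransition := smoothTransition.contDiff (n := 2)
  have hS' : ContDiff ℝ 1 (deriv smoothTransition) := hS.deriv'
  obtain ⟨C, hC⟩ := hasCompactSupport_deriv_smoothTransition.exists_bound_of_continuous
    hS'.continuous
  obtain ⟨D, hD⟩ := hasCompactSupport_deriv_smoothTransition.deriv.exists_bound_of_continuous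
    (hS'.continuous_deriv le_rfl)
  exact ⟨max 1 (max C D), by positivity, fun x =>
    ⟨(hC x).trans (by simp), (hD x).trans (by simp)⟩⟩

theorem hasDerivAt_comp_mul_sub_log {f : ℝ → ℝ} {a L x : ℝ} (hx : 0 < x)
    (hf : Differentiable ℝ f) :
    HasDerivAt (fun y => f (a * (L - Real.log y)))
      (-a * deriv f (a * (L - Real.log x)) / x) x := by
  have h : HasDerivAt (fun y => a * (L - Real.log y)) (a * (-x⁻¹)) x :=
    ((Real.hasDerivAt_log hx.ne').const_sub L).const_mul a
  refine ((hf (a * (L - Real.log x))).hasDerivAt.comp x h).congr_deriv ?_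
  ring

theorem deriv_deriv_comp_mul_sub_log {f : ℝ → ℝ} {a L x : ℝ} (hx : 0 < x)
    (hf : Differentiable ℝ f) (hf' : Differentiable ℝ (deriv f)) :
    deriv (deriv fun y => f (a * (L - Real.log y))) x =
      (a ^ 2 * deriv (deriv f) (a * (L - Real.log x)) +
        a * deriv f (a * (L - Real.log x))) / x ^ 2 := by
  have h : (deriv fun y => f (a * (L - Real.log y))) =ᶠ[nhds x]
      fun y => -a * deriv f (a * (L - Real.log y)) / y := by
    filter_upwards [Ioi_mem_nhds hx] with y hy using (hasDerivAt_comp_mul_sub_log hy hf).deriv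
  rw [h.deriv_eq]
  refine ((((hasDerivAt_comp_mul_sub_log hx hf').const_mul (-a)).div
    (hasDerivAt_id x) hx.ne').congr_deriv ?_).deriv
  simp only [id]
  field_simp
  ring

/-- Lemma 4.1: for every `ε > 0` there exist a smooth cutoff `φ` on `(0, ∞)` and
`0 < δ₁ < δ₂ ≤ ε` with `0 ≤ φ ≤ 1`, `φ = 1` on `(0, δ₁]`, `φ = 0` on `[δ₂, ∞)`,
and `|x φ'(x)| ≤ ε`, `|x² φ''(x)| ≤ ε` for all `x > 0`. -/
theorem stmt_14 (ε : ℝ) (hε : 0 < ε) :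
    ∃ (φ : ℝ → ℝ) (δ₁ δ₂ : ℝ), 0 < δ₁ ∧ δ₁ < δ₂ ∧ δ₂ ≤ ε ∧
      ContDiffOn ℝ (⊤ : ℕ∞) φ (Set.Ioi 0) ∧
      (∀ x : ℝ, 0 < x → 0 ≤ φ x ∧ φ x ≤ 1) ∧
      (∀ x : ℝ, 0 < x → x ≤ δ₁ → φ x = 1) ∧
      (∀ x : ℝ, δ₂ ≤ x → φ x = 0) ∧
      (∀ x : ℝ, 0 < x → |x * deriv φ x| ≤ ε ∧ |x ^ 2 * deriv (deriv φ) x| ≤ ε) := by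
  obtain ⟨M, hM, hbound⟩ := exists_bound_deriv_smoothTransition
  obtain ⟨a, ha, ha1, haM⟩ : ∃ a : ℝ, 0 < a ∧ a ≤ 1 ∧ 2 * (a * M) ≤ ε := by
    refine ⟨ε / (ε + 2 * M), by positivity, ?_, ?_⟩
    · rw [div_le_one (by positivity)]
      linarith
    · rw [div_mul_eq_mul_div, mul_div_assoc', div_le_iff₀ (by positivity)]
      nlinarith
  have hS : ContDiff ℝ 2 Real.smoothTransition := Real.smoothTransition.contDiff (n := 2)
  have hS' : ContDiff ℝ 1 (deriv Real.smoothTransition) := hS.deriv'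
  have hd : Differentiable ℝ Real.smoothTransition := hS.differentiable (by norm_num)
  have hd' : Differentiable ℝ (deriv Real.smoothTransition) := hS'.differentiable (by norm_num)
  refine ⟨fun x => Real.smoothTransition (a * (Real.log ε - Real.log x)),
    Real.exp (Real.log ε - a⁻¹), ε, Real.exp_pos _, ?_, le_rfl, ?_, ?_, ?_, ?_, ?_⟩
  · rw [← Real.lt_log_iff_exp_lt hε]
    linarith [inv_pos.2 ha]
  · exact Real.smoothTransition.contDiff.comp_contDiffOn (contDiffOn_const.mul
      (contDiffOn_const.sub (contDiffOn_id.log fun x hx => ne_of_gt hx)))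
  · exact fun x _ => ⟨Real.smoothTransition.nonneg _, Real.smoothTransition.le_one _⟩
  · intro x hx hxδ
    refine Real.smoothTransition.one_of_one_le ?_
    rw [← Real.log_le_iff_le_exp hx] at hxδ
    calc (1 : ℝ) = a * a⁻¹ := (mul_inv_cancel₀ ha.ne').symm
      _ ≤ a * (Real.log ε - Real.log x) := by gcongr; linarith
  · intro x hx
    refine Real.smoothTransition.zero_of_nonpos (mul_nonpos_of_nonneg_of_nonpos ha.le ?_)
    linarith [Real.log_le_log hε hx]
  · intro x hx
    obtain ⟨h1, h2⟩ := hbound (a * (Real.log ε - Real.log x))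
    have h1a : |a * deriv Real.smoothTransition (a * (Real.log ε - Real.log x))| ≤ a * M := by
      rw [abs_mul, abs_of_pos ha]
      gcongr
    have h2a : |a ^ 2 * deriv (deriv Real.smoothTransition) (a * (Real.log ε - Real.log x))| ≤
        a * M := by
      rw [abs_mul, abs_of_pos (by positivity)]
      gcongr
      nlinarith
    constructor
    · rw [(hasDerivAt_comp_mul_sub_log hx hd).deriv, mul_div_cancel₀ _ hx.ne', neg_mul, abs_neg]
      nlinarith [mul_pos ha hM]
    · rw [deriv_deriv_comp_mul_sub_log hx hd hd', mul_div_cancel₀ _ (by positivity)]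
      exact (abs_add_le _ _).trans (by linarith)
end

section
/- Let N > 0 and let f : ℝ → ℝ be an infinitely differentiable function with 0 ≤ f ≤ 1, f(x) = 1 for x ≤ 1, f(x) = 0 for x ≥ 2, and |f'(x)| ≤ N and |f''(x)| ≤ N for all x. Let ε > 0 and let λ ∈ (0, 1) satisfy 2Nλ(1 + λ) ≤ ε. Then for every δ > 0, the function φ : (0, ∞) → ℝ defined by φ(x) = f(x^λ / δ) satisfies |x·φ'(x)| ≤ ε and |x²·φ''(x)| ≤ ε for all x > 0. -/
/-- Chain rule for `y ↦ g (y ^ lam / δ)` at a positive point. -/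
lemma HasDerivAt.comp_rpow_div {g : ℝ → ℝ} {g' lam δ x : ℝ} (hx : 0 < x)
    (hg : HasDerivAt g g' (x ^ lam / δ)) :
    HasDerivAt (fun y : ℝ => g (y ^ lam / δ)) (g' * (lam * x ^ (lam - 1) / δ)) x :=
  hg.comp x ((Real.hasDerivAt_rpow_const (Or.inl hx.ne')).div_const δ)

/-- The Euler derivative `x φ'(x)` of `φ(x) = f (x ^ lam / δ)`. -/
lemma mul_deriv_comp_rpow_div {f : ℝ → ℝ} (hf : Differentiable ℝ f) (lam δ : ℝ) {x : ℝ}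
    (hx : 0 < x) :
    x * deriv (fun y : ℝ => f (y ^ lam / δ)) x =
      lam * (x ^ lam / δ * deriv f (x ^ lam / δ)) := by
  rw [((hf _).hasDerivAt.comp_rpow_div hx).deriv, Real.rpow_sub_one hx.ne']
  field_simp

/-- The second-order expression `x² φ''(x)` for `φ(x) = f (x ^ lam / δ)`. -/
lemma sq_mul_deriv_deriv_comp_rpow_div {f : ℝ → ℝ} (hf : Differentiable ℝ f)
    (hf' : Differentiable ℝ (deriv f)) (lam δ : ℝ) {x : ℝ} (hx : 0 < x) :
    x ^ 2 * deriv (deriv (fun y : ℝ => f (y ^ lam / δ))) x =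
      lam ^ 2 * ((x ^ lam / δ) ^ 2 * deriv (deriv f) (x ^ lam / δ)) +
        lam * (lam - 1) * (x ^ lam / δ * deriv f (x ^ lam / δ)) := by
  have hderiv : deriv (fun y : ℝ => f (y ^ lam / δ)) =ᶠ[nhds x]
      fun y => deriv f (y ^ lam / δ) * (lam * y ^ (lam - 1) / δ) := by
    filter_upwards [lt_mem_nhds hx] with y hy
    exact ((hf _).hasDerivAt.comp_rpow_div hy).deriv
  have hfactor : HasDerivAt (fun y : ℝ => lam * y ^ (lam - 1) / δ)
      (lam * ((lam - 1) * x ^ (lam - 1 - 1)) / δ) x :=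
    ((Real.hasDerivAt_rpow_const (Or.inl hx.ne')).const_mul lam).div_const δ
  rw [hderiv.deriv_eq, (((hf' _).hasDerivAt.comp_rpow_div hx).fun_mul hfactor).deriv,
    Real.rpow_sub_one hx.ne' (lam - 1), Real.rpow_sub_one hx.ne' lam]
  field_simp

/-- If `g` vanishes beyond `a`, so does its derivative. -/
lemma deriv_eq_zero_of_forall_gt {g : ℝ → ℝ} {a u : ℝ} (hg : ∀ x, a < x → g x = 0)
    (hu : a < u) : deriv g u = 0 := by
  have hzero : g =ᶠ[nhds u] fun _ => 0 := by
    filter_upwards [lt_mem_nhds hu] with y hy using hg y hy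
  rw [hzero.deriv_eq, deriv_const]

/-- A function bounded by `N` and vanishing beyond `a` satisfies `|u ^ k * g u| ≤ a ^ k * N`
on the nonnegative half-line. -/
lemma abs_pow_mul_le_of_forall_gt {g : ℝ → ℝ} {a N u : ℝ} (ha : 0 ≤ a)
    (hg : ∀ x, a < x → g x = 0) (hN : ∀ x, |g x| ≤ N) (hu : 0 ≤ u) (k : ℕ) :
    |u ^ k * g u| ≤ a ^ k * N := by
  have hN0 : 0 ≤ N := (abs_nonneg _).trans (hN u)
  rcases le_or_gt u a with h | h
  · rw [abs_mul, abs_of_nonneg (pow_nonneg hu k)]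
    gcongr
    exact hN u
  · rw [hg u h, mul_zero, abs_zero]
    positivity

/-- Given a smooth cutoff `f` with `0 ≤ f ≤ 1`, `f = 1` on `(-∞, 1]`, `f = 0` on
`[2, ∞)`, `|f'| ≤ N`, `|f''| ≤ N`, and `lam ∈ (0, 1)` with `2·N·lam·(1+lam) ≤ ε`,
the function `φ(x) = f(x^lam / δ)` satisfies `|x φ'(x)| ≤ ε` and
`|x² φ''(x)| ≤ ε` for all `x > 0` and every `δ > 0`. -/
theorem stmt_15 (N : ℝ) (hN : 0 < N) (f : ℝ → ℝ)
    (hf : ContDiff ℝ (⊤ : ℕ∞) f)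
    (hf01 : ∀ x : ℝ, 0 ≤ f x ∧ f x ≤ 1)
    (hf1 : ∀ x : ℝ, x ≤ 1 → f x = 1) (hf2 : ∀ x : ℝ, 2 ≤ x → f x = 0)
    (hfd1 : ∀ x : ℝ, |deriv f x| ≤ N) (hfd2 : ∀ x : ℝ, |deriv (deriv f) x| ≤ N)
    (ε lam : ℝ) (hε : 0 < ε) (hlam0 : 0 < lam) (hlam1 : lam < 1)
    (hlamε : 2 * N * lam * (1 + lam) ≤ ε) (δ : ℝ) (hδ : 0 < δ) :
    ∀ x : ℝ, 0 < x →
      |x * deriv (fun y : ℝ => f (y ^ lam / δ)) x| ≤ ε ∧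
      |x ^ 2 * deriv (deriv (fun y : ℝ => f (y ^ lam / δ))) x| ≤ ε := by
  intro x hx
  have hdiff : Differentiable ℝ f := hf.differentiable (by simp)
  have hdiff' : Differentiable ℝ (deriv f) :=
    (contDiff_infty_iff_deriv.1 hf).2.differentiable (by simp)
  have hu : 0 ≤ x ^ lam / δ := by positivity
  have hd1 : ∀ y, 2 < y → deriv f y = 0 := fun y hy =>
    deriv_eq_zero_of_forall_gt (fun z hz => hf2 z hz.le) hy
  have hd2 : ∀ y, 2 < y → deriv (deriv f) y = 0 := fun y hy =>
    deriv_eq_zero_of_forall_gt hd1 hy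
  have hb1 := abs_pow_mul_le_of_forall_gt zero_le_two hd1 hfd1 hu 1
  have hb2 := abs_pow_mul_le_of_forall_gt zero_le_two hd2 hfd2 hu 2
  rw [pow_one, pow_one] at hb1
  rw [mul_deriv_comp_rpow_div hdiff lam δ hx,
    sq_mul_deriv_deriv_comp_rpow_div hdiff hdiff' lam δ hx]
  constructor
  · rw [abs_mul, abs_of_pos hlam0]
    have : 0 < N * lam * lam := by positivity
    linarith [mul_le_mul_of_nonneg_left hb1 hlam0.le]
  · refine (abs_add_le _ _).trans ?_
    rw [abs_mul (lam ^ 2), abs_mul (lam * (lam - 1)), abs_of_pos (pow_pos hlam0 2),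
      abs_of_neg (mul_neg_of_pos_of_neg hlam0 (sub_neg.2 hlam1))]
    have hcoef : 0 ≤ -(lam * (lam - 1)) := by nlinarith
    linarith [mul_le_mul_of_nonneg_left hb1 hcoef,
      mul_le_mul_of_nonneg_left hb2 (sq_nonneg lam)]
end
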